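/- Let π* be an optimal assignment for weights w and let Δ^k be the iterates of the recursive sensitivity algorithm. Then the iterates are uniformly bounded by the original element-wise sensitivities: |Δ^k(a,b)| ≤ |s_w(a,b)| for every edge (a,b) and every k. -/

import Mathlib

open Finset Filter Topology

/-- Cost of an assignment `π : T → A` under weights `w : A × T → ℝ`. -/
noncomputable def cost {A T : Type*} [Fintype T] (w : A × T → ℝ) (π : T → A) : ℝ :=
  ∑ b : T, w (π b, b)

/-- `πs` is an optimal assignment for weights `w`: it is injective (an assignment)
and minimizes the cost among all assignments. -/
def Optimal {A T : Type*} [Fintype T] (w : A × T → ℝ) (πs : T → A) : Prop :=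
  Function.Injective πs ∧ ∀ π : T → A, Function.Injective π → cost w πs ≤ cost w π

/-- `δ` is an allowable perturbation for `(w, πs)`: `πs` remains optimal for `w + δ`. -/
def Allowable {A T : Type*} [Fintype T] (w δ : A × T → ℝ) (πs : T → A) : Prop :=
  Optimal (w + δ) πs

-- The element-wise sensitivity of edge `(a, b)` for weights `w` and assignment `πs`.
open Classical in
noncomputable def sens {A T : Type*} [Fintype T] (w : A × T → ℝ) (πs : T → A)
    (a : A) (b : T) : ℝ :=
  if πs b = a then
    sInf {c | ∃ π : T → A, Function.Injective π ∧ π b ≠ a ∧ cost w π = c} - cost w πs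
  else
    cost w πs - sInf {c | ∃ π : T → A, Function.Injective π ∧ π b = a ∧ cost w π = c}

/-- Iterates of the recursive sensitivity algorithm: `Δ⁰ = 0` and
`Δ^{k+1}(a,b) = Δ^k(a,b) + s_{w+Δ^k}(a,b)/(2N)` with `N = |T|`. -/
noncomputable def iter {A T : Type*} [Fintype T] (w : A × T → ℝ) (πs : T → A) :
    ℕ → (A × T → ℝ)
  | 0 => 0
  | k + 1 => fun e =>
      iter w πs k e + sens (w + iter w πs k) πs e.1 e.2 / (2 * (Fintype.card T : ℝ))

lemma exists_injective_apply_eq {A T : Type*} {πs : T → A} (hπs : Function.Injective πs) (a : A)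
    (b : T) : ∃ π : T → A, Function.Injective π ∧ π b = a := by
  classical
  exact ⟨Equiv.swap (πs b) a ∘ πs, (Equiv.injective _).comp hπs, by simp⟩

section Sensitivity

variable {A T : Type*} [Fintype T] {w : A × T → ℝ} {πs : T → A}

lemma cost_add (w δ : A × T → ℝ) (π : T → A) : cost (w + δ) π = cost w π + cost δ π :=
  Finset.sum_add_distrib

lemma exists_injective_apply_ne (hT : 2 ≤ Fintype.card T) (hπs : Function.Injective πs) (b : T) :
    ∃ π : T → A, Function.Injective π ∧ π b ≠ πs b := by
  classical
  obtain ⟨b', hb'⟩ := Fintype.exists_ne_of_one_lt_card hT b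
  refine ⟨πs ∘ Equiv.swap b b', hπs.comp (Equiv.injective _), ?_⟩
  simpa using hπs.ne hb'

lemma le_sens_of_assigned (hT : 2 ≤ Fintype.card T) (hπs : Function.Injective πs) {b : T} {x : ℝ}
    (hx : ∀ π : T → A, Function.Injective π → π b ≠ πs b → x ≤ cost w π - cost w πs) :
    x ≤ sens w πs (πs b) b := by
  obtain ⟨π₀, hπ₀, hb₀⟩ := exists_injective_apply_ne hT hπs b
  rw [sens, if_pos rfl, le_sub_iff_add_le]
  refine le_csInf ⟨_, π₀, hπ₀, hb₀, rfl⟩ ?_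
  rintro c ⟨π, hπ, hb, rfl⟩
  linarith [hx π hπ hb]

lemma le_neg_sens_of_unassigned (hπs : Function.Injective πs) {a : A} {b : T} (hab : πs b ≠ a)
    {x : ℝ} (hx : ∀ π : T → A, Function.Injective π → π b = a → x ≤ cost w π - cost w πs) :
    x ≤ -sens w πs a b := by
  obtain ⟨π₀, hπ₀, hb₀⟩ := exists_injective_apply_eq hπs a b
  rw [sens, if_neg hab, neg_sub, le_sub_iff_add_le]
  refine le_csInf ⟨_, π₀, hπ₀, hb₀, rfl⟩ ?_
  rintro c ⟨π, hπ, hb, rfl⟩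
  linarith [hx π hπ hb]

lemma Optimal.sens_assigned_le (h : Optimal w πs) {π : T → A} (hπ : Function.Injective π) {b : T}
    (hb : π b ≠ πs b) : sens w πs (πs b) b ≤ cost w π - cost w πs := by
  rw [sens, if_pos rfl]
  gcongr
  refine csInf_le ⟨cost w πs, ?_⟩ ⟨π, hπ, hb, rfl⟩
  rintro c ⟨π', hπ', -, rfl⟩
  exact h.2 π' hπ'

lemma Optimal.neg_sens_unassigned_le (h : Optimal w πs) {π : T → A} (hπ : Function.Injective π)
    {b : T} (hb : πs b ≠ π b) : -sens w πs (π b) b ≤ cost w π - cost w πs := by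
  rw [sens, if_neg hb, neg_sub]
  gcongr
  refine csInf_le ⟨cost w πs, ?_⟩ ⟨π, hπ, rfl, rfl⟩
  rintro c ⟨π', hπ', -, rfl⟩
  exact h.2 π' hπ'

lemma Optimal.sens_assigned_nonneg (hT : 2 ≤ Fintype.card T) (h : Optimal w πs) (b : T) :
    0 ≤ sens w πs (πs b) b :=
  le_sens_of_assigned hT h.1 fun π hπ _ => sub_nonneg.2 (h.2 π hπ)

lemma Optimal.sens_unassigned_nonpos (h : Optimal w πs) {a : A} {b : T} (hab : πs b ≠ a) :
    sens w πs a b ≤ 0 :=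
  neg_nonneg.1 <| le_neg_sens_of_unassigned h.1 hab fun π hπ _ => sub_nonneg.2 (h.2 π hπ)

/-- One step of the recursive sensitivity algorithm preserves optimality. -/
lemma Optimal.add_sens_div (hT : 2 ≤ Fintype.card T) (h : Optimal w πs) :
    Optimal (w + fun e => sens w πs e.1 e.2 / (2 * (Fintype.card T : ℝ))) πs := by
  refine ⟨h.1, fun π hπ => ?_⟩
  have hN : (0 : ℝ) < Fintype.card T := by exact_mod_cast (by omega : 0 < Fintype.card T)
  have hg := sub_nonneg.2 (h.2 π hπ)
  have hterm : ∀ b ∈ (Finset.univ : Finset T),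
      sens w πs (πs b) b / (2 * (Fintype.card T : ℝ)) -
        sens w πs (π b) b / (2 * (Fintype.card T : ℝ)) ≤
          (cost w π - cost w πs) / Fintype.card T := by
    intro b _
    by_cases hb : π b = πs b
    · rw [hb, sub_self]
      positivity
    · rw [← sub_div, div_le_div_iff₀ (by positivity) hN]
      nlinarith [h.sens_assigned_le hπ hb, h.neg_sens_unassigned_le hπ (Ne.symm hb)]
  have hsum := Finset.sum_le_sum hterm
  rw [Finset.sum_sub_distrib, Finset.sum_const, Finset.card_univ, nsmul_eq_mul,
    mul_div_cancel₀ _ hN.ne'] at hsum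
  rw [cost_add, cost_add]
  simp only [cost] at hsum ⊢
  linarith

/-- A perturbation that is nonnegative on assigned edges and nonpositive on the others. -/
def SignCompatible (πs : T → A) (δ : A × T → ℝ) : Prop :=
  (∀ b, 0 ≤ δ (πs b, b)) ∧ ∀ a b, πs b ≠ a → δ (a, b) ≤ 0

lemma optimal_and_signCompatible_iter (hT : 2 ≤ Fintype.card T) (h : Optimal w πs) (k : ℕ) :
    Optimal (w + iter w πs k) πs ∧ SignCompatible πs (iter w πs k) := by
  induction k with
  | zero => exact ⟨by simpa [iter] using h, by simp [SignCompatible, iter]⟩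
  | succ k ih =>
    obtain ⟨hk, hpos, hneg⟩ := ih
    refine ⟨?_, fun b => ?_, fun a b hab => ?_⟩
    · have hstep := hk.add_sens_div hT
      rwa [add_assoc] at hstep
    · exact add_nonneg (hpos b) (div_nonneg (hk.sens_assigned_nonneg hT b) (by positivity))
    · exact add_nonpos (hneg a b hab)
        (div_nonpos_of_nonpos_of_nonneg (hk.sens_unassigned_nonpos hab) (by positivity))

/-- A sign-compatible allowable perturbation changes the two edges at any task on which `π` and
`πs` differ by at most the original cost gap in total. -/
lemma SignCompatible.sub_le_cost_sub {δ : A × T → ℝ} (hδ : SignCompatible πs δ)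
    (h : Allowable w δ πs) {π : T → A} (hπ : Function.Injective π) (b : T) :
    δ (πs b, b) - δ (π b, b) ≤ cost w π - cost w πs := by
  have hterm : ∀ b ∈ (Finset.univ : Finset T), 0 ≤ δ (πs b, b) - δ (π b, b) := by
    intro b _
    by_cases hb : πs b = π b
    · rw [hb, sub_self]
    · linarith [hδ.1 b, hδ.2 _ _ hb]
  have hsingle := Finset.single_le_sum hterm (Finset.mem_univ b)
  rw [Finset.sum_sub_distrib] at hsingle
  have hcost := h.2 π hπ
  rw [cost_add, cost_add] at hcost
  simp only [cost] at hsingle hcost ⊢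
  linarith

/-- Sign-compatible allowable perturbations are bounded by the element-wise sensitivities. -/
lemma SignCompatible.abs_le_abs_sens (hT : 2 ≤ Fintype.card T) {δ : A × T → ℝ}
    (hδ : SignCompatible πs δ) (h : Allowable w δ πs) (a : A) (b : T) :
    |δ (a, b)| ≤ |sens w πs a b| := by
  by_cases hab : πs b = a
  · subst hab
    rw [abs_of_nonneg (hδ.1 b)]
    refine le_trans (le_sens_of_assigned hT h.1 fun π hπ hb => ?_) (le_abs_self _)
    linarith [hδ.sub_le_cost_sub h hπ b, hδ.2 _ _ (Ne.symm hb)]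
  · rw [abs_of_nonpos (hδ.2 a b hab)]
    refine le_trans (le_neg_sens_of_unassigned h.1 hab fun π hπ hb => ?_) (neg_le_abs _)
    subst hb
    linarith [hδ.sub_le_cost_sub h hπ b, hδ.1 b]

end Sensitivity

theorem stmt14 {A T : Type*} [Fintype A] [Fintype T] [Nonempty A] [Nonempty T]
    (hT : 2 ≤ Fintype.card T) (hAT : Fintype.card T ≤ Fintype.card A)
    (w : A × T → ℝ) (πs : T → A)
    (hopt : Optimal w πs) :
    ∀ (k : ℕ) (a : A) (b : T), |iter w πs k (a, b)| ≤ |sens w πs a b| := by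
  intro k a b
  obtain ⟨hk, hsign⟩ := optimal_and_signCompatible_iter hT hopt k
  exact hsign.abs_le_abs_sens hT hk a b
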